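/- Let d ≥ R ≥ 1, λ : Fin R → ℝ, and let A, B, C ∈ ℝ^{d×R} all have orthonormal columns. Define T(a,b,c) = Σ_{j=1}^{R} λ_j A_{a j} B_{b j} C_{c j}. Let Φ : Fin d × Fin d × Fin d → ℝ and φ ≥ 0 satisfy |Σ_{k,z,u} Φ(k,z,u) x_k y_z w_u| ≤ φ‖x‖‖y‖‖w‖ for all x, y, w ∈ ℝ^d, and let T̂ = T + Φ. For a tensor S, let S_u denote the d×d slice (S_u)_{a b} = S(a,b,u). Define M = Σ_{u=1}^{d} T_u T_uᵀ and M̂ = Σ_{u=1}^{d} T̂_u T̂_uᵀ. Then for all x, y ∈ ℝ^d, |xᵀ (M̂ − M) y| ≤ (2‖λ‖φ + d·φ²) · ‖x‖ · ‖y‖, where ‖λ‖ = √(Σ_{j=1}^{R} λ_j²). -/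

import Mathlib

open Matrix BigOperators

/-- Euclidean norm of a finite real vector. -/
noncomputable def eunorm {n : ℕ} (x : Fin n → ℝ) : ℝ := Real.sqrt (∑ i, x i ^ 2)

/-!
Let `T₍₁₎` be the mode-1 unfolding of `T`, so that `M = T₍₁₎ T₍₁₎ᵀ` and
`M̂ - M = T₍₁₎ Φ₍₁₎ᵀ + Φ₍₁₎ T₍₁₎ᵀ + Φ₍₁₎ Φ₍₁₎ᵀ`. A column `b_j ⊗ c_j` of the Khatri–Rao product of
`B` and `C` pairs with `y Φ₍₁₎` to at most `φ ‖y‖`, so Cauchy–Schwarz over the components of `T`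
bounds each cross term by `‖λ‖ φ`. In the last term, `x Φ₍₁₎` consists of one vector per third-mode
slice, each of norm at most `φ ‖x‖`; this is where the factor `d` comes from.
-/

local notation "‖" x "‖₂" => ‖WithLp.toLp 2 x‖

lemma le_of_mul_self_le_mul {α : Type*} [Mul α] [Zero α] [LinearOrder α] [MulPosStrictMono α]
    {a b : α} (hb : 0 ≤ b) (h : a * a ≤ b * a) : a ≤ b :=
  le_of_not_gt fun hlt => h.not_gt (mul_lt_mul_of_pos_right hlt (hb.trans_lt hlt))

lemma dotProduct_mul_transpose_mulVec {m n α : Type*} [Fintype m] [Fintype n]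
    [NonUnitalCommSemiring α] (U V : Matrix m n α) (x y : m → α) :
    x ⬝ᵥ (U * Vᵀ) *ᵥ y = (x ᵥ* U) ⬝ᵥ (y ᵥ* V) := by
  rw [← mulVec_mulVec, dotProduct_mulVec, mulVec_transpose]

section EuclideanNorm

variable {ι ρ : Type*} [Fintype ι] [Fintype ρ]

lemma eunorm_eq_norm_toLp {n : ℕ} (x : Fin n → ℝ) : eunorm x = ‖x‖₂ := by
  simp [eunorm, EuclideanSpace.norm_eq]

lemma dotProduct_self_eq_norm_toLp_sq (v : ι → ℝ) : v ⬝ᵥ v = ‖v‖₂ ^ 2 := by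
  simp only [dotProduct, EuclideanSpace.real_norm_sq_eq, ← sq]

lemma abs_dotProduct_le_norm_toLp_mul (v w : ι → ℝ) : |v ⬝ᵥ w| ≤ ‖v‖₂ * ‖w‖₂ := by
  simpa [EuclideanSpace.inner_toLp_toLp, dotProduct_comm] using
    abs_real_inner_le_norm (WithLp.toLp 2 v) (WithLp.toLp 2 w)

lemma norm_toLp_mul_le_of_abs_le {w g : ι → ℝ} {c : ℝ} (hc : 0 ≤ c) (hg : ∀ i, |g i| ≤ c) :
    ‖w * g‖₂ ≤ ‖w‖₂ * c := by
  refine le_of_sq_le_sq ?_ (by positivity)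
  simp only [mul_pow, EuclideanSpace.real_norm_sq_eq, Pi.mul_apply, Finset.sum_mul]
  gcongr ∑ i, w i ^ 2 * ?_ with i
  exact sq_le_sq.mpr ((hg i).trans (le_abs_self c))

lemma norm_toLp_mulVec_of_transpose_mul_self_eq_one [DecidableEq ρ] {A : Matrix ι ρ ℝ}
    (hA : Aᵀ * A = 1) (c : ρ → ℝ) : ‖A *ᵥ c‖₂ = ‖c‖₂ := by
  rw [← sq_eq_sq₀ (norm_nonneg _) (norm_nonneg _), ← dotProduct_self_eq_norm_toLp_sq,
    ← dotProduct_self_eq_norm_toLp_sq, dotProduct_mulVec, ← mulVec_transpose, mulVec_mulVec, hA,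
    one_mulVec]

lemma norm_toLp_vecMul_le_of_transpose_mul_self_eq_one [DecidableEq ρ] {A : Matrix ι ρ ℝ}
    (hA : Aᵀ * A = 1) (x : ι → ℝ) : ‖x ᵥ* A‖₂ ≤ ‖x‖₂ := by
  refine le_of_mul_self_le_mul (norm_nonneg _) ?_
  calc ‖x ᵥ* A‖₂ * ‖x ᵥ* A‖₂ = x ⬝ᵥ A *ᵥ (x ᵥ* A) := by
        rw [dotProduct_mulVec, dotProduct_self_eq_norm_toLp_sq, sq]
    _ ≤ ‖x‖₂ * ‖A *ᵥ (x ᵥ* A)‖₂ := (le_abs_self _).trans (abs_dotProduct_le_norm_toLp_mul _ _)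
    _ = ‖x‖₂ * ‖x ᵥ* A‖₂ := by rw [norm_toLp_mulVec_of_transpose_mul_self_eq_one hA]

lemma norm_toLp_col_eq_one_of_transpose_mul_self_eq_one {ρ : Type*} [DecidableEq ρ]
    {A : Matrix ι ρ ℝ} (hA : Aᵀ * A = 1) (j : ρ) : ‖A.col j‖₂ = 1 := by
  have hself : A.col j ⬝ᵥ A.col j = 1 := (congrFun₂ hA j j).trans (one_apply_eq j)
  rwa [dotProduct_self_eq_norm_toLp_sq, pow_eq_one_iff_of_nonneg (norm_nonneg _) two_ne_zero]
    at hself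

end EuclideanNorm

section Tensor

variable {ι κ μ ρ α : Type*}

/-- The mode-1 unfolding of a third-order tensor: the matrix whose rows are the flattened
first-mode slices. -/
def unfoldFirst (S : ι → κ → μ → α) : Matrix ι (κ × μ) α := of fun i p => S i p.1 p.2

/-- The slice of a third-order tensor at the third-mode index `u`. -/
def thirdSlice (S : ι → κ → μ → α) (u : μ) : Matrix ι κ α := of fun a b => S a b u

/-- The slice-based initialization matrix `∑ u, S_u S_uᵀ` of a third-order tensor `S`. -/
def sliceGram [NonUnitalNonAssocSemiring α] [Fintype κ] [Fintype μ] (S : ι → κ → μ → α) :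
    Matrix ι ι α :=
  ∑ u, thirdSlice S u * (thirdSlice S u)ᵀ

/-- The columnwise Kronecker product of two matrices. Its rows are indexed by pairs in the order
used by `unfoldFirst`. -/
def khatriRao [Mul α] (B : Matrix κ ρ α) (C : Matrix μ ρ α) : Matrix (κ × μ) ρ α :=
  of fun p j => B p.1 j * C p.2 j

/-- The CP tensor `∑ j, lam j • a_j ⊗ b_j ⊗ c_j` with weights `lam` and factor matrices
`A`, `B`, `C`. -/
def cpTensor [NonUnitalNonAssocSemiring α] [Fintype ρ] (lam : ρ → α) (A : Matrix ι ρ α)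
    (B : Matrix κ ρ α) (C : Matrix μ ρ α) : ι → κ → μ → α :=
  fun a b c => ∑ j, lam j * A a j * B b j * C c j

lemma unfoldFirst_add [Add α] (S S' : ι → κ → μ → α) :
    unfoldFirst (S + S') = unfoldFirst S + unfoldFirst S' := rfl

lemma sliceGram_apply [NonUnitalNonAssocSemiring α] [Fintype κ] [Fintype μ] (S : ι → κ → μ → α)
    (i j : ι) : sliceGram S i j = ∑ u, ∑ b, S i b u * S j b u := by
  simp only [sliceGram, Matrix.sum_apply, mul_apply, transpose_apply, thirdSlice, of_apply]

lemma sliceGram_eq_unfoldFirst_mul_transpose [NonUnitalNonAssocSemiring α] [Fintype κ] [Fintype μ]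
    (S : ι → κ → μ → α) : sliceGram S = unfoldFirst S * (unfoldFirst S)ᵀ := by
  ext i j
  simp only [sliceGram_apply, mul_apply, transpose_apply, unfoldFirst, of_apply,
    Fintype.sum_prod_type_right]

lemma sliceGram_add_sub_sliceGram [NonUnitalNonAssocRing α] [Fintype κ] [Fintype μ]
    (T Φ : ι → κ → μ → α) :
    sliceGram (T + Φ) - sliceGram T =
      unfoldFirst T * (unfoldFirst Φ)ᵀ + unfoldFirst Φ * (unfoldFirst T)ᵀ +
        unfoldFirst Φ * (unfoldFirst Φ)ᵀ := by
  simp only [sliceGram_eq_unfoldFirst_mul_transpose, unfoldFirst_add, transpose_add, Matrix.add_mul,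
    Matrix.mul_add]
  abel

lemma vecMul_unfoldFirst_cpTensor [CommSemiring α] [Fintype ι] [Fintype ρ] (lam : ρ → α)
    (A : Matrix ι ρ α) (B : Matrix κ ρ α) (C : Matrix μ ρ α) (x : ι → α) :
    x ᵥ* unfoldFirst (cpTensor lam A B C) = khatriRao B C *ᵥ (lam * (x ᵥ* A)) := by
  ext p
  simp only [vecMul, mulVec, dotProduct, unfoldFirst, cpTensor, khatriRao, of_apply, Pi.mul_apply,
    Finset.mul_sum]
  rw [Finset.sum_comm]
  exact Finset.sum_congr rfl fun j _ => Finset.sum_congr rfl fun i _ => by ring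

/-- The trilinear form of the tensor `Φ` has operator norm at most `φ` with respect to the Euclidean
norms. -/
def TensorOpNormLE [Fintype ι] [Fintype κ] [Fintype μ] (Φ : ι → κ → μ → ℝ) (φ : ℝ) : Prop :=
  ∀ (x : ι → ℝ) (y : κ → ℝ) (w : μ → ℝ),
    |∑ k, ∑ z, ∑ u, Φ k z u * x k * y z * w u| ≤ φ * ‖x‖₂ * ‖y‖₂ * ‖w‖₂

namespace TensorOpNormLE

variable [Fintype ι] [Fintype κ] [Fintype μ] {Φ : ι → κ → μ → ℝ} {φ : ℝ}

lemma abs_vecMul_unfoldFirst_dotProduct_le (hΦ : TensorOpNormLE Φ φ) (x : ι → ℝ) (y : κ → ℝ)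
    (w : μ → ℝ) :
    |(x ᵥ* unfoldFirst Φ) ⬝ᵥ (fun p => y p.1 * w p.2)| ≤ φ * ‖x‖₂ * ‖y‖₂ * ‖w‖₂ := by
  have htrilinear : (x ᵥ* unfoldFirst Φ) ⬝ᵥ (fun p => y p.1 * w p.2) =
      ∑ k, ∑ z, ∑ u, Φ k z u * x k * y z * w u := by
    rw [← dotProduct_mulVec]
    simp only [dotProduct, mulVec, unfoldFirst, of_apply, Fintype.sum_prod_type, Finset.mul_sum]
    exact Finset.sum_congr rfl fun k _ => Finset.sum_congr rfl fun z _ =>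
      Finset.sum_congr rfl fun u _ => by ring
  exact htrilinear ▸ hΦ x y w

lemma norm_toLp_vecMul_thirdSlice_le (hΦ : TensorOpNormLE Φ φ) (hφ : 0 ≤ φ) (x : ι → ℝ) (u : μ) :
    ‖x ᵥ* thirdSlice Φ u‖₂ ≤ φ * ‖x‖₂ := by
  classical
  set v := x ᵥ* thirdSlice Φ u with hv
  let e : μ → ℝ := Pi.single u 1
  have hself : (x ᵥ* unfoldFirst Φ) ⬝ᵥ (fun p => v p.1 * e p.2) = v ⬝ᵥ v := by
    simp [e, dotProduct, Fintype.sum_prod_type, Pi.single_apply, hv, vecMul, unfoldFirst,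
      thirdSlice]
  refine le_of_mul_self_le_mul (by positivity) ?_
  calc ‖v‖₂ * ‖v‖₂ = v ⬝ᵥ v := by rw [dotProduct_self_eq_norm_toLp_sq, sq]
    _ ≤ φ * ‖x‖₂ * ‖v‖₂ * ‖e‖₂ := by
        rw [← hself]
        exact (le_abs_self _).trans (hΦ.abs_vecMul_unfoldFirst_dotProduct_le x v e)
    _ = φ * ‖x‖₂ * ‖v‖₂ := by simp [e]

lemma norm_toLp_vecMul_unfoldFirst_le (hΦ : TensorOpNormLE Φ φ) (hφ : 0 ≤ φ) (x : ι → ℝ) :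
    ‖x ᵥ* unfoldFirst Φ‖₂ ≤ √(Fintype.card μ) * (φ * ‖x‖₂) := by
  refine le_of_sq_le_sq ?_ (by positivity)
  calc ‖x ᵥ* unfoldFirst Φ‖₂ ^ 2 = ∑ u, ‖x ᵥ* thirdSlice Φ u‖₂ ^ 2 := by
        simp only [EuclideanSpace.real_norm_sq_eq, Fintype.sum_prod_type_right]
        rfl
    _ ≤ ∑ _u : μ, (φ * ‖x‖₂) ^ 2 := by
        gcongr with u
        exact hΦ.norm_toLp_vecMul_thirdSlice_le hφ x u
    _ = (√(Fintype.card μ) * (φ * ‖x‖₂)) ^ 2 := by simp [mul_pow]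

lemma abs_dotProduct_unfoldFirst_mul_transpose_mulVec_le (hΦ : TensorOpNormLE Φ φ) (hφ : 0 ≤ φ)
    (x y : ι → ℝ) :
    |x ⬝ᵥ (unfoldFirst Φ * (unfoldFirst Φ)ᵀ) *ᵥ y| ≤ Fintype.card μ * φ ^ 2 * ‖x‖₂ * ‖y‖₂ := by
  calc |x ⬝ᵥ (unfoldFirst Φ * (unfoldFirst Φ)ᵀ) *ᵥ y|
      ≤ ‖x ᵥ* unfoldFirst Φ‖₂ * ‖y ᵥ* unfoldFirst Φ‖₂ := by
        rw [dotProduct_mul_transpose_mulVec]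
        exact abs_dotProduct_le_norm_toLp_mul _ _
    _ ≤ (√(Fintype.card μ) * (φ * ‖x‖₂)) * (√(Fintype.card μ) * (φ * ‖y‖₂)) := by
        gcongr
        · exact hΦ.norm_toLp_vecMul_unfoldFirst_le hφ x
        · exact hΦ.norm_toLp_vecMul_unfoldFirst_le hφ y
    _ = √(Fintype.card μ) ^ 2 * φ ^ 2 * ‖x‖₂ * ‖y‖₂ := by ring
    _ = Fintype.card μ * φ ^ 2 * ‖x‖₂ * ‖y‖₂ := by rw [Real.sq_sqrt (Nat.cast_nonneg _)]

lemma abs_vecMul_khatriRao_le (hΦ : TensorOpNormLE Φ φ) (hφ : 0 ≤ φ) {B : Matrix κ ρ ℝ}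
    {C : Matrix μ ρ ℝ} (hB : ∀ j, ‖B.col j‖₂ ≤ 1) (hC : ∀ j, ‖C.col j‖₂ ≤ 1) (y : ι → ℝ) (j : ρ) :
    |(y ᵥ* unfoldFirst Φ ᵥ* khatriRao B C) j| ≤ φ * ‖y‖₂ := by
  calc |(y ᵥ* unfoldFirst Φ ᵥ* khatriRao B C) j| ≤ φ * ‖y‖₂ * ‖B.col j‖₂ * ‖C.col j‖₂ :=
        hΦ.abs_vecMul_unfoldFirst_dotProduct_le y (B.col j) (C.col j)
    _ ≤ φ * ‖y‖₂ * 1 * 1 := by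
        gcongr
        exacts [hB j, hC j]
    _ = φ * ‖y‖₂ := by ring

lemma abs_dotProduct_unfoldFirst_cpTensor_mul_transpose_mulVec_le [Fintype ρ]
    (hΦ : TensorOpNormLE Φ φ) (hφ : 0 ≤ φ) (lam : ρ → ℝ) {A : Matrix ι ρ ℝ} {B : Matrix κ ρ ℝ}
    {C : Matrix μ ρ ℝ} (hA : ∀ x, ‖x ᵥ* A‖₂ ≤ ‖x‖₂) (hB : ∀ j, ‖B.col j‖₂ ≤ 1)
    (hC : ∀ j, ‖C.col j‖₂ ≤ 1) (x y : ι → ℝ) :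
    |x ⬝ᵥ (unfoldFirst (cpTensor lam A B C) * (unfoldFirst Φ)ᵀ) *ᵥ y| ≤
      ‖lam‖₂ * φ * ‖x‖₂ * ‖y‖₂ := by
  set g := y ᵥ* unfoldFirst Φ ᵥ* khatriRao B C with hg
  have hcomponents : x ⬝ᵥ (unfoldFirst (cpTensor lam A B C) * (unfoldFirst Φ)ᵀ) *ᵥ y =
      (x ᵥ* A) ⬝ᵥ (lam * g) := by
    rw [dotProduct_mul_transpose_mulVec, vecMul_unfoldFirst_cpTensor, dotProduct_comm,
      dotProduct_mulVec, ← hg]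
    exact Finset.sum_congr rfl fun j _ => by simp only [Pi.mul_apply]; ring
  calc |x ⬝ᵥ (unfoldFirst (cpTensor lam A B C) * (unfoldFirst Φ)ᵀ) *ᵥ y|
      ≤ ‖x ᵥ* A‖₂ * ‖lam * g‖₂ := hcomponents ▸ abs_dotProduct_le_norm_toLp_mul _ _
    _ ≤ ‖x‖₂ * (‖lam‖₂ * (φ * ‖y‖₂)) := by
        gcongr
        · exact hA x
        · exact norm_toLp_mul_le_of_abs_le (by positivity) (hΦ.abs_vecMul_khatriRao_le hφ hB hC y)
    _ = ‖lam‖₂ * φ * ‖x‖₂ * ‖y‖₂ := by ring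

end TensorOpNormLE

theorem slice_init_perturbation_bound_general [Fintype ι] [Fintype κ] [Fintype μ] [Fintype ρ]
    (lam : ρ → ℝ) {A : Matrix ι ρ ℝ} {B : Matrix κ ρ ℝ} {C : Matrix μ ρ ℝ}
    (hA : ∀ x, ‖x ᵥ* A‖₂ ≤ ‖x‖₂) (hB : ∀ j, ‖B.col j‖₂ ≤ 1) (hC : ∀ j, ‖C.col j‖₂ ≤ 1)
    {Φ : ι → κ → μ → ℝ} {φ : ℝ} (hφ : 0 ≤ φ) (hΦ : TensorOpNormLE Φ φ) (x y : ι → ℝ) :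
    |x ⬝ᵥ (sliceGram (cpTensor lam A B C + Φ) - sliceGram (cpTensor lam A B C)) *ᵥ y| ≤
      (2 * ‖lam‖₂ * φ + Fintype.card μ * φ ^ 2) * ‖x‖₂ * ‖y‖₂ := by
  set U := unfoldFirst (cpTensor lam A B C)
  set V := unfoldFirst Φ
  have hUV : |x ⬝ᵥ (U * Vᵀ) *ᵥ y| ≤ ‖lam‖₂ * φ * ‖x‖₂ * ‖y‖₂ :=
    hΦ.abs_dotProduct_unfoldFirst_cpTensor_mul_transpose_mulVec_le hφ lam hA hB hC x y
  have hVU : |x ⬝ᵥ (V * Uᵀ) *ᵥ y| ≤ ‖lam‖₂ * φ * ‖y‖₂ * ‖x‖₂ := by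
    rw [dotProduct_mul_transpose_mulVec, dotProduct_comm, ← dotProduct_mul_transpose_mulVec]
    exact hΦ.abs_dotProduct_unfoldFirst_cpTensor_mul_transpose_mulVec_le hφ lam hA hB hC y x
  have hVV : |x ⬝ᵥ (V * Vᵀ) *ᵥ y| ≤ Fintype.card μ * φ ^ 2 * ‖x‖₂ * ‖y‖₂ :=
    hΦ.abs_dotProduct_unfoldFirst_mul_transpose_mulVec_le hφ x y
  rw [sliceGram_add_sub_sliceGram, add_mulVec, add_mulVec, dotProduct_add, dotProduct_add]
  linarith [abs_add_three (x ⬝ᵥ (U * Vᵀ) *ᵥ y) (x ⬝ᵥ (V * Uᵀ) *ᵥ y) (x ⬝ᵥ (V * Vᵀ) *ᵥ y)]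

end Tensor

/-- Perturbation of the slice-based initialization matrix:
`‖M̂ − M‖_op ≤ 2‖λ‖φ + dφ²` as a bilinear-form bound. -/
theorem slice_init_perturbation_bound
    {d R : ℕ} (hR : 1 ≤ R) (hRd : R ≤ d)
    (lam : Fin R → ℝ) (A B C : Matrix (Fin d) (Fin R) ℝ)
    (hA : Aᵀ * A = 1) (hB : Bᵀ * B = 1) (hC : Cᵀ * C = 1)
    (T Φ : Fin d → Fin d → Fin d → ℝ)
    (hT : ∀ a b c, T a b c = ∑ j, lam j * A a j * B b j * C c j)
    (φ : ℝ) (hφ : 0 ≤ φ)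
    (hop : ∀ x y w : Fin d → ℝ,
      |∑ k, ∑ z, ∑ u, Φ k z u * x k * y z * w u| ≤ φ * eunorm x * eunorm y * eunorm w) :
    ∀ x y : Fin d → ℝ,
      |∑ i, ∑ j, x i *
          ((∑ u, ∑ b, (T i b u + Φ i b u) * (T j b u + Φ j b u)) -
            (∑ u, ∑ b, T i b u * T j b u)) * y j|
        ≤ (2 * Real.sqrt (∑ m, lam m ^ 2) * φ + d * φ ^ 2) * eunorm x * eunorm y := by
  intro x y
  obtain rfl : T = cpTensor lam A B C := funext₃ hT
  have hΦ : TensorOpNormLE Φ φ := by simpa only [TensorOpNormLE, ← eunorm_eq_norm_toLp] using hop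
  have hbound := slice_init_perturbation_bound_general lam
    (norm_toLp_vecMul_le_of_transpose_mul_self_eq_one hA)
    (fun j => (norm_toLp_col_eq_one_of_transpose_mul_self_eq_one hB j).le)
    (fun j => (norm_toLp_col_eq_one_of_transpose_mul_self_eq_one hC j).le) hφ hΦ x y
  simpa only [dotProduct, mulVec, Matrix.sub_apply, sliceGram_apply, Pi.add_apply, Finset.mul_sum,
    ← mul_assoc, ← eunorm_eq_norm_toLp, eunorm, Fintype.card_fin] using hbound
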